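/- For any cBCK-algebra A, the spectrum X(A) is a locally compact topological space: every point has a compact neighborhood (indeed every prime ideal lies in some compact open basic set σ(a)). -/

import Mathlib

/-!
Each basic open set `σ(a)` consists of the primes avoiding `a`, and these sets cover the spectrum
because primes are proper, so it is enough that `σ(a)` is compact (`isCompact_sigmaPt`).

The heart is the prime ideal theorem `exists_prime`: an ideal avoiding `a` extends to a prime
avoiding `a`. By Zorn there is an ideal `P` maximal among those avoiding `a`. For every `y`, the
quotient `(P : y) = {z | z ∧ y ∈ P}` is again an ideal (`isIdeal_quot`), by the inequality
`(z ∧ y)·(w ∧ y) ≤ z·w`. If `x ∧ y ∈ P` and `x ∉ P`, then `(P : y)` is strictly larger than `P`,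
so it contains `a`; thus `y ∈ (P : a)`. As `a ∧ a = a ∉ P`, the ideal `(P : a)` avoids `a`, hence
equals `P`, so `y ∈ P`.

For compactness, if `σ(a)` is covered by the `σ(I i)`, then `a` lies in the ideal generated by all
the `I i`, since otherwise a prime containing that ideal and avoiding `a` would be uncovered.
That ideal is the directed union of those generated by finite subfamilies, so one of these
contains `a`, and the corresponding finite subfamily covers `σ(a)`.
-/

universe u v

/-- A commutative BCK-algebra structure on a type `A`. -/
structure CBCK (A : Type u) where
  op : A → A → A
  zero : A
  op_op_comm : ∀ x y z : A, op (op x y) z = op (op x z) y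
  op_comm : ∀ x y : A, op x (op x y) = op y (op y x)
  op_self : ∀ x : A, op x x = zero
  op_zero : ∀ x : A, op x zero = x

namespace CBCK

variable {A : Type u}

/-- The meet `x ∧ y := y·(y·x)`. -/
def meet (C : CBCK A) (x y : A) : A := C.op y (C.op y x)

/-- A subset `I` is an ideal: `0 ∈ I` and `x·y ∈ I`, `y ∈ I` imply `x ∈ I`. -/
def IsIdeal (C : CBCK A) (I : Set A) : Prop :=
  C.zero ∈ I ∧ ∀ x y : A, C.op x y ∈ I → y ∈ I → x ∈ I

/-- A prime ideal: a proper ideal such that `x ∧ y ∈ P` implies `x ∈ P` or `y ∈ P`. -/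
def IsPrimeIdeal (C : CBCK A) (P : Set A) : Prop :=
  C.IsIdeal P ∧ P ≠ Set.univ ∧ ∀ x y : A, C.meet x y ∈ P → x ∈ P ∨ y ∈ P

/-- The ideal generated by a subset `S`: the smallest ideal containing `S`. -/
def idealGen (C : CBCK A) (S : Set A) : Set A :=
  ⋂₀ {I : Set A | C.IsIdeal I ∧ S ⊆ I}

/-- The spectrum: the set of prime ideals. -/
def Spec (C : CBCK A) : Type u := {P : Set A // C.IsPrimeIdeal P}

/-- `σ(I) = {P ∈ X(A) : I ⊄ P}`. -/
def sigmaSet (C : CBCK A) (I : Set A) : Set C.Spec := {P : C.Spec | ¬ I ⊆ P.1}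

/-- `σ(a) = σ((a])`. -/
def sigmaPt (C : CBCK A) (a : A) : Set C.Spec := C.sigmaSet (C.idealGen {a})

/-- Iterated subtraction: `x·y⁰ = x`, `x·yⁿ⁺¹ = (x·yⁿ)·y`. -/
def opPow (C : CBCK A) (x y : A) : ℕ → A
  | 0 => x
  | n + 1 => C.op (C.opPow x y n) y

/-- A subset `B` is a subalgebra: contains `0` and is closed under the operation. -/
def IsSubalg (C : CBCK A) (B : Set A) : Prop :=
  C.zero ∈ B ∧ ∀ x ∈ B, ∀ y ∈ B, C.op x y ∈ B

/-- The subalgebra generated by a subset. -/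
def subalgGen (C : CBCK A) (S : Set A) : Set A :=
  ⋂₀ {B : Set A | C.IsSubalg B ∧ S ⊆ B}

/-- `I` is an ideal of the subalgebra `B`. -/
def IsIdealIn (C : CBCK A) (B I : Set A) : Prop :=
  I ⊆ B ∧ C.zero ∈ I ∧ ∀ x ∈ B, ∀ y ∈ B, C.op x y ∈ I → y ∈ I → x ∈ I

/-- `P` is a prime ideal of the subalgebra `B`. -/
def IsPrimeIdealIn (C : CBCK A) (B P : Set A) : Prop :=
  C.IsIdealIn B P ∧ P ≠ B ∧ ∀ x ∈ B, ∀ y ∈ B, C.meet x y ∈ P → x ∈ P ∨ y ∈ P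

/-- The spectrum of a subalgebra `B`: its set of prime ideals. -/
def SpecIn (C : CBCK A) (B : Set A) : Type u := {P : Set A // C.IsPrimeIdealIn B P}

/-- The annihilator `S* = {a : a ∧ s = 0 for all s ∈ S}`. -/
def ann (C : CBCK A) (S : Set A) : Set A := {a : A | ∀ s ∈ S, C.meet a s = C.zero}

/-- The annihilator of `S` computed inside the subalgebra `B`. -/
def annIn (C : CBCK A) (B S : Set A) : Set A :=
  {a : A | a ∈ B ∧ ∀ s ∈ S, C.meet a s = C.zero}

/-- `A` is involutory: every ideal `I` satisfies `I = I**`. -/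
def Involutory (C : CBCK A) : Prop := ∀ I : Set A, C.IsIdeal I → C.ann (C.ann I) = I

/-- The subalgebra `B` is involutory. -/
def InvolutoryIn (C : CBCK A) (B : Set A) : Prop :=
  ∀ I : Set A, C.IsIdealIn B I → C.annIn B (C.annIn B I) = I

/-- The data of `A` being the cBCK-union of the family of subalgebras `Aset`:
the subalgebras cover `A`, pairwise intersect in `{0}`, and the operation between
distinct members is `x·y = x`. -/
def IsUnionFamily (C : CBCK A) {Λ : Type v} (Aset : Λ → Set A) : Prop :=
  (∀ x : A, ∃ l : Λ, x ∈ Aset l) ∧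
  (∀ l : Λ, C.IsSubalg (Aset l)) ∧
  (∀ l m : Λ, l ≠ m → Aset l ∩ Aset m = {C.zero}) ∧
  (∀ l m : Λ, l ≠ m → ∀ x ∈ Aset l, ∀ y ∈ Aset m, C.op x y = x)

end CBCK

namespace CBCK

variable {A : Type u}

theorem zero_op (C : CBCK A) (x : A) : C.op C.zero x = C.zero := by
  -- `0 = x·x = x·(x·0) = 0·(0·x)`, so `0·x = (0·(0·x))·x = (0·x)·(0·x) = 0`.
  have h : C.op C.zero (C.op C.zero x) = C.zero := by
    rw [← C.op_comm x C.zero, C.op_zero, C.op_self]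
  calc C.op C.zero x = C.op (C.op C.zero (C.op C.zero x)) x := by rw [h]
    _ = C.zero := by rw [C.op_op_comm, C.op_self]

theorem op_le_left (C : CBCK A) (x y : A) : C.op (C.op x y) x = C.zero := by
  rw [C.op_op_comm, C.op_self, C.zero_op]

theorem op_op_le (C : CBCK A) (x y : A) : C.op (C.op x (C.op x y)) y = C.zero := by
  rw [C.op_op_comm, C.op_self]

/-- If `x ≤ y` then `x = x ∧ y`, written as a difference with left argument `y`. -/
theorem op_op_of_le (C : CBCK A) {x y : A} (h : C.op x y = C.zero) :
    C.op y (C.op y x) = x := by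
  rw [← C.op_comm, h, C.op_zero]

theorem le_trans' (C : CBCK A) {x y z : A} (h : C.op x y = C.zero) (h' : C.op y z = C.zero) :
    C.op x z = C.zero := by
  rw [← C.op_op_of_le h, C.op_op_comm, h', C.zero_op]

theorem op_mono_left (C : CBCK A) {x y : A} (z : A) (h : C.op x y = C.zero) :
    C.op (C.op x z) (C.op y z) = C.zero := by
  have : C.op x z = C.op (C.op y z) (C.op y x) := by
    rw [C.op_op_comm, C.op_op_of_le h]
  rw [this, C.op_le_left]

theorem op_anti_right (C : CBCK A) {x y : A} (z : A) (h : C.op x y = C.zero) :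
    C.op (C.op z y) (C.op z x) = C.zero := by
  rw [C.op_op_comm]
  exact C.le_trans' (C.op_op_le z x) h

theorem meet_le_left (C : CBCK A) (x y : A) : C.op (C.meet x y) x = C.zero :=
  C.op_op_le y x

theorem meet_le_right (C : CBCK A) (x y : A) : C.op (C.meet x y) y = C.zero :=
  C.op_le_left y _

theorem meet_comm' (C : CBCK A) (x y : A) : C.meet x y = C.meet y x :=
  C.op_comm y x

theorem le_meet (C : CBCK A) {m x y : A} (hx : C.op m x = C.zero) (hy : C.op m y = C.zero) :
    C.op m (C.meet x y) = C.zero := by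
  have h := C.op_anti_right y (C.op_anti_right y hx)
  rwa [C.op_op_of_le hy] at h

/-- The inequality `(z ∧ y)·(w ∧ y) ≤ (z·w) ∧ y`, which makes quotients of ideals ideals. -/
theorem meet_op_meet_le (C : CBCK A) (z w y : A) :
    C.op (C.op (C.meet z y) (C.meet w y)) (C.meet (C.op z w) y) = C.zero := by
  have hz := C.meet_le_left z y
  have hy := C.meet_le_right z y
  generalize C.meet z y = t at hz hy ⊢
  refine C.le_meet ?_ (C.le_trans' (C.op_le_left _ _) hy)
  -- `t·(t·w) = t ∧ w` lies below `w ∧ y`, hence `t·(w ∧ y) ≤ t·(t·(t·w)) = t·w ≤ z·w`.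
  have h1 : C.op (C.op t (C.op t w)) (C.meet w y) = C.zero :=
    C.le_meet (C.op_op_le t w) (C.le_trans' (C.op_le_left _ _) hy)
  have h2 := C.op_anti_right t h1
  rw [C.op_op_of_le (C.op_le_left t w)] at h2
  exact C.le_trans' h2 (C.op_mono_left w hz)

theorem IsIdeal.mem_of_le {C : CBCK A} {I : Set A} (hI : C.IsIdeal I) {x y : A}
    (h : C.op x y = C.zero) (hy : y ∈ I) : x ∈ I :=
  hI.2 x y (h ▸ hI.1) hy

/-- The quotient `(P : y) = {z | z ∧ y ∈ P}` of an ideal by an element is an ideal. -/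
theorem isIdeal_quot {C : CBCK A} {P : Set A} (hP : C.IsIdeal P) (y : A) :
    C.IsIdeal {z | C.meet z y ∈ P} :=
  ⟨hP.mem_of_le (C.meet_le_left _ _) hP.1, fun z w hzw hw =>
    hP.2 _ _ (hP.mem_of_le (C.meet_op_meet_le z w y) hzw) hw⟩

theorem isIdeal_idealGen (C : CBCK A) (S : Set A) : C.IsIdeal (C.idealGen S) :=
  ⟨fun _ hI => hI.1.1, fun x y hxy hy I hI => hI.1.2 x y (hxy I hI) (hy I hI)⟩

theorem subset_idealGen (C : CBCK A) (S : Set A) : S ⊆ C.idealGen S :=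
  fun _ hx _ hI => hI.2 hx

theorem idealGen_subset {C : CBCK A} {S I : Set A} (hI : C.IsIdeal I) (h : S ⊆ I) :
    C.idealGen S ⊆ I :=
  fun _ hx => hx I ⟨hI, h⟩

theorem mem_sigmaPt {C : CBCK A} {a : A} {P : C.Spec} : P ∈ C.sigmaPt a ↔ a ∉ P.1 :=
  not_congr ⟨fun h => h (C.subset_idealGen _ rfl),
    fun h => idealGen_subset P.2.1 (Set.singleton_subset_iff.2 h)⟩

/-- A directed union of ideals is an ideal. -/
theorem isIdeal_iUnion {C : CBCK A} {κ : Type*} [Nonempty κ] {J : κ → Set A}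
    (hJ : ∀ k, C.IsIdeal (J k)) (hd : Directed (· ⊆ ·) J) : C.IsIdeal (⋃ k, J k) := by
  refine ⟨Set.mem_iUnion.2 ⟨Classical.arbitrary κ, (hJ _).1⟩, fun x y hxy hy => ?_⟩
  obtain ⟨k, hk⟩ := Set.mem_iUnion.1 hxy
  obtain ⟨l, hl⟩ := Set.mem_iUnion.1 hy
  obtain ⟨m, hkm, hlm⟩ := hd k l
  exact Set.mem_iUnion.2 ⟨m, (hJ m).2 x y (hkm hk) (hlm hl)⟩

/-- Prime ideal theorem: an ideal avoiding `a` is contained in a prime ideal avoiding `a`. -/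
theorem exists_prime {C : CBCK A} {J : Set A} (hJ : C.IsIdeal J) {a : A} (ha : a ∉ J) :
    ∃ P : C.Spec, J ⊆ P.1 ∧ a ∉ P.1 := by
  obtain ⟨P, hJP, hmax⟩ := zorn_subset_nonempty {I : Set A | C.IsIdeal I ∧ a ∉ I} (by
    intro c hc hchain hne
    have : Nonempty c := hne.to_subtype
    refine ⟨⋃₀ c, ⟨?_, ?_⟩, fun s hs => Set.subset_sUnion_of_mem hs⟩
    · rw [Set.sUnion_eq_iUnion]
      exact isIdeal_iUnion (fun k => (hc k.2).1) hchain.directed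
    · rintro ⟨s, hs, has⟩
      exact (hc hs).2 has) J ⟨hJ, ha⟩
  obtain ⟨hP, haP⟩ := hmax.prop
  have key : ∀ y z, a ∉ {z | C.meet z y ∈ P} → C.meet z y ∈ P → z ∈ P := fun y z h hz =>
    hmax.le_of_ge ⟨isIdeal_quot hP y, h⟩
      (fun w hw => hP.mem_of_le (C.meet_le_left w y) hw) hz
  refine ⟨⟨P, hP, fun h => haP (h ▸ Set.mem_univ a), fun x y hxy => ?_⟩, hJP, haP⟩
  by_contra! hcon
  -- Maximality applied to `(P : y)` gives `a ∧ y ∈ P`; applied to `(P : a)` it then gives `y ∈ P`.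
  have hay : C.meet a y ∈ P := by
    by_contra h
    exact hcon.1 (key y x h hxy)
  refine hcon.2 (key a y (fun h => haP ?_) (C.meet_comm' a y ▸ hay))
  have h' : C.meet a a ∈ P := h
  rwa [meet, C.op_self, C.op_zero] at h'

theorem isCompact_sigmaPt (C : CBCK A) [TopologicalSpace C.Spec]
    (hT : ∀ s : Set C.Spec, IsOpen s ↔ ∃ I : Set A, C.IsIdeal I ∧ s = C.sigmaSet I) (a : A) :
    IsCompact (C.sigmaPt a) := by
  classical
  refine isCompact_of_finite_subcover fun {ι} U hU hcover => ?_
  choose I hI hUI using fun i => (hT (U i)).1 (hU i)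
  let J : Finset ι → Set A := fun t => C.idealGen (⋃ i ∈ t, I i)
  have hmono : Monotone J := fun s t hst =>
    idealGen_subset (C.isIdeal_idealGen _)
      ((Set.biUnion_subset_biUnion_left hst).trans (C.subset_idealGen _))
  have ha : a ∈ ⋃ t, J t := by
    by_contra ha
    obtain ⟨P, hJP, haP⟩ :=
      exists_prime (isIdeal_iUnion (fun _ => C.isIdeal_idealGen _) hmono.directed_le) ha
    obtain ⟨i, hi⟩ := Set.mem_iUnion.1 (hcover (mem_sigmaPt.2 haP))
    rw [hUI] at hi
    exact hi fun x hx => hJP (Set.mem_iUnion.2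
      ⟨{i}, C.subset_idealGen _ (Set.mem_biUnion (Finset.mem_singleton_self i) hx)⟩)
  obtain ⟨t, ht⟩ := Set.mem_iUnion.1 ha
  refine ⟨t, fun P hP => ?_⟩
  by_contra hPt
  refine mem_sigmaPt.1 hP (idealGen_subset P.2.1 (Set.iUnion₂_subset fun i hi => ?_) ht)
  by_contra hIP
  exact hPt (Set.mem_biUnion hi (by rw [hUI]; exact hIP))

end CBCK

/-- The spectrum of a cBCK-algebra is weakly locally compact:
every point has a compact neighborhood. -/
theorem spec_weaklyLocallyCompact {A : Type u} (C : CBCK A)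
    [ts : TopologicalSpace C.Spec]
    (hT : ∀ s : Set C.Spec, IsOpen s ↔ ∃ I : Set A, C.IsIdeal I ∧ s = C.sigmaSet I) :
    WeaklyLocallyCompactSpace C.Spec := by
  refine ⟨fun P => ?_⟩
  obtain ⟨a, ha⟩ := (Set.ne_univ_iff_exists_notMem _).1 P.2.2.1
  have hopen : IsOpen (C.sigmaPt a) := (hT _).2 ⟨_, C.isIdeal_idealGen {a}, rfl⟩
  exact ⟨C.sigmaPt a, C.isCompact_sigmaPt hT a, hopen.mem_nhds (CBCK.mem_sigmaPt.2 ha)⟩
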